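/- Let i, j ∈ ℍ denote the standard quaternion units. Suppose (R₋,S₋,R₊,S₊) are unit quaternions satisfying R₋S₋R₋⁻¹S₋⁻¹·R₊S₊R₊⁻¹S₊⁻¹ = 1 and R₋S₋R₋⁻¹S₋⁻¹ = −1. Then there exist unit quaternions u and A such that uR₋u⁻¹ = i, uS₋u⁻¹ = j, uR₊u⁻¹ = A·j·A⁻¹, and uS₊u⁻¹ = A·i·A⁻¹. Moreover, for unit quaternions A, A′, the quadruples (i, j, AjA⁻¹, AiA⁻¹) and (i, j, A′jA′⁻¹, A′iA′⁻¹) are simultaneously conjugate (by some unit quaternion) if and only if A′ = A or A′ = −A. Hence the level set κ⁻¹(−1) of the character variety of the genus two surface is in bijection with SU(2)/{±1} ≅ ℝP³. -/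

import Mathlib

noncomputable section

/-- The standard quaternion unit `i`. -/
def qi : Quaternion ℝ := ⟨0, 1, 0, 0⟩

/-- The standard quaternion unit `j`. -/
def qj : Quaternion ℝ := ⟨0, 0, 1, 0⟩

/-- Quadruples of unit quaternions satisfying the genus two relation `[R₋,S₋][R₊,S₊] = 1`
and lying in the level set `κ = −1`, i.e. `[R₋,S₋] = −1`. -/
def memXneg (t : Quaternion ℝ × Quaternion ℝ × Quaternion ℝ × Quaternion ℝ) : Prop :=
  ‖t.1‖ = 1 ∧ ‖t.2.1‖ = 1 ∧ ‖t.2.2.1‖ = 1 ∧ ‖t.2.2.2‖ = 1 ∧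
    t.1 * t.2.1 * t.1⁻¹ * t.2.1⁻¹ * (t.2.2.1 * t.2.2.2 * t.2.2.1⁻¹ * t.2.2.2⁻¹) = 1 ∧
    t.1 * t.2.1 * t.1⁻¹ * t.2.1⁻¹ = -1

/-- Simultaneous conjugation relation on the level set `κ⁻¹(−1)`. -/
def conjRelNeg (s t : {t // memXneg t}) : Prop :=
  ∃ u : Quaternion ℝ, ‖u‖ = 1 ∧
    t.1.1 = u * s.1.1 * u⁻¹ ∧ t.1.2.1 = u * s.1.2.1 * u⁻¹ ∧
    t.1.2.2.1 = u * s.1.2.2.1 * u⁻¹ ∧ t.1.2.2.2 = u * s.1.2.2.2 * u⁻¹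

/-- The relation identifying a unit quaternion `A` with `±A`; its quotient is
`SU(2)/{±1} ≅ ℝP³`. -/
def pmRel (a b : {q : Quaternion ℝ // ‖q‖ = 1}) : Prop := b.1 = a.1 ∨ b.1 = -a.1

@[simp] lemma my_re_q1 : (1 : Quaternion ℝ).re = 1 := rfl
@[simp] lemma my_imI_q1 : (1 : Quaternion ℝ).imI = 0 := rfl
@[simp] lemma my_imJ_q1 : (1 : Quaternion ℝ).imJ = 0 := rfl
@[simp] lemma my_imK_q1 : (1 : Quaternion ℝ).imK = 0 := rfl
@[simp] lemma my_re_q0 : (0 : Quaternion ℝ).re = 0 := rfl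
@[simp] lemma my_imI_q0 : (0 : Quaternion ℝ).imI = 0 := rfl
@[simp] lemma my_imJ_q0 : (0 : Quaternion ℝ).imJ = 0 := rfl
@[simp] lemma my_imK_q0 : (0 : Quaternion ℝ).imK = 0 := rfl
@[simp] lemma qi_re : qi.re = 0 := rfl
@[simp] lemma qi_imI : qi.imI = 1 := rfl
@[simp] lemma qi_imJ : qi.imJ = 0 := rfl
@[simp] lemma qi_imK : qi.imK = 0 := rfl
@[simp] lemma qj_re : qj.re = 0 := rfl
@[simp] lemma qj_imI : qj.imI = 0 := rfl
@[simp] lemma qj_imJ : qj.imJ = 1 := rfl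
@[simp] lemma qj_imK : qj.imK = 0 := rfl

open Quaternion in
lemma qnorm_sq (u : Quaternion ℝ) (h : ‖u‖ = 1) :
    u.re ^ 2 + u.imI ^ 2 + u.imJ ^ 2 + u.imK ^ 2 = 1 := by
  rw [← Quaternion.normSq_def', Quaternion.normSq_eq_norm_mul_self, h, one_mul]

lemma q_ne (u : Quaternion ℝ) (h : ‖u‖ = 1) : u ≠ 0 := by
  rintro rfl
  simp at h

lemma qi_norm : ‖qi‖ = 1 := by
  have h : ‖qi‖ * ‖qi‖ = 1 := by
    rw [← Quaternion.normSq_eq_norm_mul_self, Quaternion.normSq_def']; simp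
  nlinarith [norm_nonneg qi]

lemma qj_norm : ‖qj‖ = 1 := by
  have h : ‖qj‖ * ‖qj‖ = 1 := by
    rw [← Quaternion.normSq_eq_norm_mul_self, Quaternion.normSq_def']; simp
  nlinarith [norm_nonneg qj]

lemma qi_sq : qi * qi = -1 := by
  apply Quaternion.ext <;> simp

lemma qj_sq : qj * qj = -1 := by
  apply Quaternion.ext <;> simp

lemma qji : qj * qi = -(qi * qj) := by
  apply Quaternion.ext <;> simp

lemma q_central (u : Quaternion ℝ) (h : ‖u‖ = 1) (h1 : u * qi = qi * u) (h2 : u * qj = qj * u) :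
    u = 1 ∨ u = -1 := by
  have hn := qnorm_sq u h
  have a1 := congrArg QuaternionAlgebra.imJ h1
  have a2 := congrArg QuaternionAlgebra.imK h1
  have a3 := congrArg QuaternionAlgebra.imK h2
  simp at a1 a2 a3
  have b1 : u.imI = 0 := by linarith
  have b2 : u.imJ = 0 := by linarith
  have b3 : u.imK = 0 := by linarith
  rw [b1, b2, b3] at hn
  have : (u.re - 1) * (u.re + 1) = 0 := by linarith
  rcases mul_eq_zero.mp this with h | h
  · left; apply Quaternion.ext <;> simp [b1, b2, b3]; linarith
  · right; apply Quaternion.ext <;> simp [b1, b2, b3]; linarith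

lemma comm_neg (R S : Quaternion ℝ) (hR : ‖R‖ = 1) (hS : ‖S‖ = 1)
    (h : R * S * R⁻¹ * S⁻¹ = -1) : R * S = -(S * R) := by
  have h1 := q_ne R hR
  have h2 := q_ne S hS
  have := congrArg (fun x => x * S * R) h
  simpa [mul_assoc, h1, h2] using this

lemma neg_comm_iff (R S : Quaternion ℝ) (hR : ‖R‖ = 1) (hS : ‖S‖ = 1)
    (h : R * S = -(S * R)) : R * S * R⁻¹ * S⁻¹ = -1 := by
  have h1 := q_ne R hR
  have h2 := q_ne S hS
  rw [h]
  simp [mul_assoc, h1, h2]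

lemma anti_sq (R S : Quaternion ℝ) (hR : ‖R‖ = 1) (hS : ‖S‖ = 1)
    (h : R * S = -(S * R)) : R * R = -1 := by
  have hn := qnorm_sq R hR
  have hs := qnorm_sq S hS
  have a0 := congrArg QuaternionAlgebra.re h
  have a1 := congrArg QuaternionAlgebra.imI h
  have a2 := congrArg QuaternionAlgebra.imJ h
  have a3 := congrArg QuaternionAlgebra.imK h
  simp at a0 a1 a2 a3
  have r0 : R.re = 0 := by
    linear_combination (-R.re) * hs + S.re / 2 * a0 + S.imI / 2 * a1 + S.imJ / 2 * a2
      + S.imK / 2 * a3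
  rw [r0] at hn
  apply Quaternion.ext <;> simp [r0] <;> linarith

lemma exists_conj (R S : Quaternion ℝ) (hR : ‖R‖ = 1) (hS : ‖S‖ = 1)
    (h : R * S = -(S * R)) :
    ∃ u : Quaternion ℝ, ‖u‖ = 1 ∧ u * R * u⁻¹ = qi ∧ u * S * u⁻¹ = qj := by
  have hR2 := anti_sq R S hR hS h
  have hS2 := anti_sq S R hS hR (by rw [h, neg_neg])
  let T : Quaternion ℝ → Quaternion ℝ := fun x =>
    x - qi * x * R - qj * x * S - qi * qj * x * (R * S)
  have hSR : S * R = -(R * S) := by rw [h, neg_neg]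
  have hTR : ∀ x, T x * R = qi * T x := by
    intro x
    have e1 : T x * R = x * R - qi * x * (R * R) - qj * x * (S * R) - qi * qj * x * (R * (S * R)) := by
      simp only [T]; noncomm_ring
    have e2 : qi * T x = qi * x - (qi * qi) * x * R - qi * qj * x * S
        - (qi * qi) * qj * x * (R * S) := by
      simp only [T]; noncomm_ring
    have e3 : R * (S * R) = S := by
      rw [hSR, mul_neg, ← mul_assoc, hR2]; simp
    rw [e1, e2, e3, hSR, hR2, qi_sq]; noncomm_ring
  have hTS : ∀ x, T x * S = qj * T x := by
    intro x
    have e1 : T x * S = x * S - qi * x * (R * S) - qj * x * (S * S) - qi * qj * x * (R * (S * S)) := by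
      simp only [T]; noncomm_ring
    have e2 : qj * T x = qj * x - (qj * qi) * x * R - (qj * qj) * x * S
        - ((qj * qi) * qj) * x * (R * S) := by
      simp only [T]; noncomm_ring
    have e3 : (qj * qi) * qj = qi := by
      rw [qji, neg_mul, mul_assoc, qj_sq]; simp
    rw [e1, e2, e3, hS2, qji, qj_sq]; noncomm_ring
  have hsum : T 1 - qi * T qi - qj * T qj - (qi * qj) * T (qi * qj) = 1 + 1 + 1 + 1 := by
    apply Quaternion.ext <;> simp [T] <;> ring
  have hex : ∃ x, T x ≠ 0 := by
    by_contra hcon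
    push Not at hcon
    rw [hcon, hcon, hcon, hcon] at hsum
    have := congrArg QuaternionAlgebra.re hsum
    simp only [mul_zero, sub_zero, Quaternion.re_add, my_re_q0, my_re_q1] at this
    linarith
  obtain ⟨x, hx⟩ := hex
  have hnx : ‖T x‖ ≠ 0 := norm_ne_zero_iff.mpr hx
  have hu : ‖(‖T x‖⁻¹ • T x)‖ = 1 := by
    rw [norm_smul, norm_inv, norm_norm, inv_mul_cancel₀ hnx]
  refine ⟨‖T x‖⁻¹ • T x, hu, ?_, ?_⟩
  · rw [mul_inv_eq_iff_eq_mul₀ (q_ne _ hu), smul_mul_assoc, hTR, mul_smul_comm]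
  · rw [mul_inv_eq_iff_eq_mul₀ (q_ne _ hu), smul_mul_assoc, hTS, mul_smul_comm]

lemma part1 (Rm Sm Rp Sp : Quaternion ℝ) (h1 : ‖Rm‖ = 1) (h2 : ‖Sm‖ = 1) (h3 : ‖Rp‖ = 1)
    (h4 : ‖Sp‖ = 1)
    (h5 : Rm * Sm * Rm⁻¹ * Sm⁻¹ * (Rp * Sp * Rp⁻¹ * Sp⁻¹) = 1)
    (h6 : Rm * Sm * Rm⁻¹ * Sm⁻¹ = -1) :
      ∃ u A : Quaternion ℝ, ‖u‖ = 1 ∧ ‖A‖ = 1 ∧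
        u * Rm * u⁻¹ = qi ∧ u * Sm * u⁻¹ = qj ∧
        u * Rp * u⁻¹ = A * qj * A⁻¹ ∧ u * Sp * u⁻¹ = A * qi * A⁻¹ := by
  obtain ⟨u, hu, hu1, hu2⟩ := exists_conj Rm Sm h1 h2 (comm_neg _ _ h1 h2 h6)
  rw [h6, neg_one_mul] at h5
  have h7 := comm_neg _ _ h3 h4 (neg_eq_iff_eq_neg.mp h5)
  obtain ⟨v, hv, hv1, hv2⟩ := exists_conj Sp Rp h4 h3 (by rw [h7, neg_neg])
  have hv0 := q_ne v hv
  refine ⟨u, u * v⁻¹, hu, by rw [norm_mul, norm_inv, hu, hv]; simp, hu1, hu2, ?_, ?_⟩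
  · rw [← hv2]; simp [mul_assoc, hv0]
  · rw [← hv1]; simp [mul_assoc, hv0]

lemma part2 (A A' : Quaternion ℝ) (hA : ‖A‖ = 1) (hA' : ‖A'‖ = 1) :
      ((∃ u : Quaternion ℝ, ‖u‖ = 1 ∧
          u * qi * u⁻¹ = qi ∧ u * qj * u⁻¹ = qj ∧
          u * (A * qj * A⁻¹) * u⁻¹ = A' * qj * A'⁻¹ ∧
          u * (A * qi * A⁻¹) * u⁻¹ = A' * qi * A'⁻¹) ↔
        (A' = A ∨ A' = -A)) := by
  have hA0 := q_ne A hA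
  have hA0' := q_ne A' hA'
  constructor
  · rintro ⟨u, hu, h1, h2, h3, h4⟩
    have hu0 := q_ne u hu
    have key : ∀ q, A * q * A⁻¹ = A' * q * A'⁻¹ → (A'⁻¹ * A) * q = q * (A'⁻¹ * A) := by
      intro q hq
      have := congrArg (fun x => A'⁻¹ * x * A) hq
      simpa [mul_assoc, hA0, hA0'] using this
    have hAA : (A * qj * A⁻¹) = A' * qj * A'⁻¹ ∧ (A * qi * A⁻¹) = A' * qi * A'⁻¹ := by
      rcases q_central u hu ((mul_inv_eq_iff_eq_mul₀ hu0).mp h1)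
        ((mul_inv_eq_iff_eq_mul₀ hu0).mp h2) with rfl | rfl
      · simpa using And.intro h3 h4
      · simpa [inv_neg] using And.intro h3 h4
    rcases q_central (A'⁻¹ * A) (by rw [norm_mul, norm_inv, hA, hA']; simp) (key _ hAA.2)
      (key _ hAA.1) with h | h
    · left
      have := congrArg (fun x => A' * x) h
      simpa [hA0'] using this.symm
    · right
      have := congrArg (fun x => A' * x) h
      simp [hA0'] at this
      rw [this, neg_neg]
  · rintro (rfl | rfl)
    · exact ⟨1, by simp, by simp, by simp, by simp, by simp⟩
    · exact ⟨1, by simp, by simp, by simp, by simp [inv_neg], by simp [inv_neg]⟩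

lemma nf_mem (A : Quaternion ℝ) (hA : ‖A‖ = 1) :
    memXneg (qi, qj, A * qj * A⁻¹, A * qi * A⁻¹) := by
  have hA0 := q_ne A hA
  have n1 : ‖A * qj * A⁻¹‖ = 1 := by simp [hA, qj_norm]
  have n2 : ‖A * qi * A⁻¹‖ = 1 := by simp [hA, qi_norm]
  have c1 : qi * qj * qi⁻¹ * qj⁻¹ = -1 :=
    neg_comm_iff _ _ qi_norm qj_norm (by rw [qji, neg_neg])
  have c2 := neg_comm_iff (A * qj * A⁻¹) (A * qi * A⁻¹) n1 n2 (by
    have e1 : A * qj * A⁻¹ * (A * qi * A⁻¹) = A * (qj * qi) * A⁻¹ := by simp [mul_assoc, hA0]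
    have e2 : A * qi * A⁻¹ * (A * qj * A⁻¹) = A * (qi * qj) * A⁻¹ := by simp [mul_assoc, hA0]
    rw [e1, e2, qji]; simp)
  refine ⟨qi_norm, qj_norm, n1, n2, ?_, c1⟩
  show qi * qj * qi⁻¹ * qj⁻¹ * _ = 1
  rw [c1, c2]; simp

lemma conj_equiv : Equivalence conjRelNeg := by
  refine ⟨fun s => ⟨1, by simp, by simp, by simp, by simp, by simp⟩, ?_, ?_⟩
  · rintro s t ⟨u, hu, h1, h2, h3, h4⟩
    have hu0 := q_ne u hu
    refine ⟨u⁻¹, by simp [hu], ?_, ?_, ?_, ?_⟩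
    · rw [h1]; simp [mul_assoc, hu0]
    · rw [h2]; simp [mul_assoc, hu0]
    · rw [h3]; simp [mul_assoc, hu0]
    · rw [h4]; simp [mul_assoc, hu0]
  · rintro s t r ⟨u, hu, h1, h2, h3, h4⟩ ⟨v, hv, k1, k2, k3, k4⟩
    refine ⟨v * u, by simp [hu, hv], ?_, ?_, ?_, ?_⟩
    · rw [k1, h1]; simp [mul_assoc]
    · rw [k2, h2]; simp [mul_assoc]
    · rw [k3, h3]; simp [mul_assoc]
    · rw [k4, h4]; simp [mul_assoc]

def nf (a : {q : Quaternion ℝ // ‖q‖ = 1}) : {t // memXneg t} :=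
  ⟨(qi, qj, a.1 * qj * a.1⁻¹, a.1 * qi * a.1⁻¹), nf_mem a.1 a.2⟩

lemma nf_rel (a b : {q : Quaternion ℝ // ‖q‖ = 1}) : conjRelNeg (nf a) (nf b) ↔ pmRel a b := by
  rw [pmRel, ← part2 a.1 b.1 a.2 b.2]
  simp only [conjRelNeg, nf]
  constructor
  · rintro ⟨u, h, h1, h2, h3, h4⟩
    exact ⟨u, h, h1.symm, h2.symm, h3.symm, h4.symm⟩
  · rintro ⟨u, h, h1, h2, h3, h4⟩
    exact ⟨u, h, h1.symm, h2.symm, h3.symm, h4.symm⟩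

lemma part3 : Nonempty (Quot conjRelNeg ≃ Quot pmRel) := by
  let f : Quot pmRel → Quot conjRelNeg :=
    Quot.map nf (fun a b h => (nf_rel a b).mpr h)
  refine ⟨(Equiv.ofBijective f ⟨?_, ?_⟩).symm⟩
  · rintro ⟨a⟩ ⟨b⟩ hab
    apply Quot.sound
    rw [← nf_rel]
    exact conj_equiv.eqvGen_iff.mp (Quot.eqvGen_exact hab)
  · rintro ⟨⟨⟨Rm, Sm, Rp, Sp⟩, h1, h2, h3, h4, h5, h6⟩⟩
    obtain ⟨u, A, hu, hA, k1, k2, k3, k4⟩ := part1 Rm Sm Rp Sp h1 h2 h3 h4 h5 h6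
    refine ⟨Quot.mk _ ⟨A, hA⟩, ?_⟩
    apply Eq.symm
    apply Quot.sound
    exact ⟨u, hu, k1.symm, k2.symm, k3.symm, k4.symm⟩

/-- Every quadruple `(R₋,S₋,R₊,S₊)` of unit quaternions with `[R₋,S₋][R₊,S₊] = 1` and
`[R₋,S₋] = −1` is simultaneously conjugate to `(i, j, AjA⁻¹, AiA⁻¹)` for some unit
quaternion `A`; two such normal forms are simultaneously conjugate iff `A′ = ±A`; hence
the level set `κ⁻¹(−1)` of the genus two character variety is in bijection with
`SU(2)/{±1} ≅ ℝP³`. -/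
theorem level_set_neg_one_is_RP3 :
    (∀ Rm Sm Rp Sp : Quaternion ℝ, ‖Rm‖ = 1 → ‖Sm‖ = 1 → ‖Rp‖ = 1 → ‖Sp‖ = 1 →
      Rm * Sm * Rm⁻¹ * Sm⁻¹ * (Rp * Sp * Rp⁻¹ * Sp⁻¹) = 1 →
      Rm * Sm * Rm⁻¹ * Sm⁻¹ = -1 →
      ∃ u A : Quaternion ℝ, ‖u‖ = 1 ∧ ‖A‖ = 1 ∧
        u * Rm * u⁻¹ = qi ∧ u * Sm * u⁻¹ = qj ∧
        u * Rp * u⁻¹ = A * qj * A⁻¹ ∧ u * Sp * u⁻¹ = A * qi * A⁻¹) ∧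
    (∀ A A' : Quaternion ℝ, ‖A‖ = 1 → ‖A'‖ = 1 →
      ((∃ u : Quaternion ℝ, ‖u‖ = 1 ∧
          u * qi * u⁻¹ = qi ∧ u * qj * u⁻¹ = qj ∧
          u * (A * qj * A⁻¹) * u⁻¹ = A' * qj * A'⁻¹ ∧
          u * (A * qi * A⁻¹) * u⁻¹ = A' * qi * A'⁻¹) ↔
        (A' = A ∨ A' = -A))) ∧
    Nonempty (Quot conjRelNeg ≃ Quot pmRel) := by
  exact ⟨part1, part2, part3⟩
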